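/- (Tail probabilities.) Let β ∈ ℝ^D be arbitrary. Let F : ℝ → ℝ be a continuous, strictly increasing function with range (0,1) (a continuous cumulative distribution function), and let G : ℝ → ℝ be the function satisfying Φ(G(t)) = F(t) for all t ∈ ℝ. Let q_a and q_b be the unique reals with F(q_a) = Φ(a) and F(q_b) = Φ(b). If y is a real-valued random variable such that the distribution of (H ∘ G)(y) is the standard normal distribution N(0,1), then ℙ(y ≤ t) = F(t) for every t ∈ (−∞, q_a] ∪ [q_b, ∞). -/

import Mathlib

open MeasureTheory Finset

noncomputable section

/-- The cardinal cubic B-spline. -/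
def cubicN (t : ℝ) : ℝ :=
  if 0 ≤ t ∧ t < 1 then t ^ 3 / 6
  else if 1 ≤ t ∧ t < 2 then (-3 * t ^ 3 + 12 * t ^ 2 - 12 * t + 4) / 6
  else if 2 ≤ t ∧ t < 3 then (3 * t ^ 3 - 24 * t ^ 2 + 60 * t - 44) / 6
  else if 3 ≤ t ∧ t ≤ 4 then (4 - t) ^ 3 / 6
  else 0

/-- Equidistant knots `k_j = k0 + j·k`. -/
def knot (k0 k : ℝ) (j : ℤ) : ℝ := k0 + (j : ℝ) * k

/-- Cubic B-spline basis functions `B_j(x) = N((x − k_{j−3})/k)` for `j = 1, …, J`. -/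
def Bspl (k0 k : ℝ) (j : ℕ) (x : ℝ) : ℝ := cubicN ((x - knot k0 k ((j : ℤ) - 3)) / k)

/-- The coefficients `γ_1, …, γ_J` (with `J = D + 7`, `m = D + 5`), defined from the
unconstrained vector `β ∈ ℝ^D`. -/
def gam (D : ℕ) (k0 k : ℝ) (β : Fin D → ℝ) (j : ℕ) : ℝ :=
  if j = 1 then k0
  else if j = 2 ∨ j = 3 ∨ j = 4 ∨ j = D + 5 ∨ j = D + 6 ∨ j = D + 7 then Real.log k
  else if h : 5 ≤ j ∧ j ≤ D + 4 then
    β ⟨j - 5, by omega⟩ - Real.log ((∑ d, Real.exp (β d)) / ((D : ℝ) * k))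
  else 0

/-- The transformation `H`: a cubic B-spline with coefficients
`γ_1 + ∑_{ℓ=2}^j exp(γ_ℓ)` on `[k_1, k_m]` (with `m = D + 5`), and the identity outside. -/
def Hfun (D : ℕ) (k0 k : ℝ) (β : Fin D → ℝ) (x : ℝ) : ℝ :=
  if knot k0 k 1 ≤ x ∧ x ≤ knot k0 k ((D : ℤ) + 5) then
    ∑ j ∈ Finset.Icc 1 (D + 7),
      Bspl k0 k j x * (gam D k0 k β 1 + ∑ l ∈ Finset.Icc 2 j, Real.exp (gam D k0 k β l))
  else x


/-- The standard normal CDF `Φ`. -/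
def stdNormalCDF (t : ℝ) : ℝ := ((ProbabilityTheory.gaussianReal 0 1) (Set.Iic t)).toReal

/-!
Since `Φ` and `F` are strictly increasing, so is `G`; if `H` is strictly increasing as well, then
`{y ≤ t} = {H (G y) ≤ H (G t)}` has probability `Φ (H (G t))`, which is `Φ (G t) = F t` as soon as
`H` fixes `G t`.

On a knot interval only four coefficients contribute to `H`, and summation by parts writes the
cubic piece in terms of their increments, with weights that increase in `x`. The increments
`exp γ_ℓ` are positive, so `H` is strictly increasing. The first three and the last three of them
equal `k`, and the softmax normalisation makes the interior ones add up to `D * k`, so near both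
ends the coefficients are equally spaced knots; a cubic B-spline reproduces affine functions, hence
`H` is the identity outside `[a, b]`.
-/

section Measure

lemma measure_setOf_le_eq_map_Iic {Ω α γ : Type*} [MeasurableSpace Ω] [LinearOrder α]
    [Preorder γ] [TopologicalSpace γ] [ClosedIicTopology γ] [MeasurableSpace γ]
    [OpensMeasurableSpace γ] {P : Measure Ω} {X : Ω → α} {T : α → γ} (hT : StrictMono T)
    (hTX : AEMeasurable (fun ω => T (X ω)) P) (t : α) :
    P {ω | X ω ≤ t} = P.map (fun ω => T (X ω)) (Set.Iic (T t)) := by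
  simp only [Measure.map_apply_of_aemeasurable hTX measurableSet_Iic, Set.preimage, Set.mem_Iic,
    hT.le_iff_le]

lemma strictMono_measureReal_Iic {α : Type*} [LinearOrder α] [DenselyOrdered α]
    [TopologicalSpace α] [OrderClosedTopology α] [MeasurableSpace α] [OpensMeasurableSpace α]
    (μ : Measure α) [IsFiniteMeasure μ] [μ.IsOpenPosMeasure] :
    StrictMono fun t => μ.real (Set.Iic t) := by
  intro s t hst
  have pos_Ioc : 0 < μ.real (Set.Ioc s t) :=
    ENNReal.toReal_pos ((isOpen_Ioo.measure_pos μ (Set.nonempty_Ioo.2 hst)).trans_le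
      (measure_mono Set.Ioo_subset_Ioc_self)).ne' (measure_ne_top μ _)
  calc μ.real (Set.Iic s) < μ.real (Set.Iic s) + μ.real (Set.Ioc s t) :=
        lt_add_of_pos_right _ pos_Ioc
    _ = μ.real (Set.Iic t) := by
        rw [← measureReal_union (Set.Iic_disjoint_Ioc le_rfl) measurableSet_Ioc,
          Set.Iic_union_Ioc_eq_Iic hst.le]

lemma strictMono_stdNormalCDF : StrictMono stdNormalCDF :=
  have : (ProbabilityTheory.gaussianReal 0 1).IsOpenPosMeasure :=
    (ProbabilityTheory.gaussianReal_absolutelyContinuous' 0 one_ne_zero).isOpenPosMeasure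
  strictMono_measureReal_Iic _

end Measure

section CubicN

variable {t u : ℝ}

lemma cubicN_of_nonpos (ht : t ≤ 0) : cubicN t = 0 := by
  rcases ht.lt_or_eq with ht | rfl
  · unfold cubicN
    repeat rw [if_neg (by rintro ⟨_, _⟩; linarith)]
  · norm_num [cubicN]

lemma cubicN_of_four_le (ht : 4 ≤ t) : cubicN t = 0 := by
  rcases ht.lt_or_eq with ht | rfl
  · unfold cubicN
    repeat rw [if_neg (by rintro ⟨_, _⟩; linarith)]
  · norm_num [cubicN]

lemma cubicN_of_mem_Icc (hu : u ∈ Set.Icc 0 1) : cubicN u = u ^ 3 / 6 := by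
  rcases hu.2.lt_or_eq with hlt | rfl
  · exact if_pos ⟨hu.1, hlt⟩
  · norm_num [cubicN]

lemma cubicN_add_one (hu : u ∈ Set.Icc 0 1) :
    cubicN (u + 1) = (-3 * u ^ 3 + 3 * u ^ 2 + 3 * u + 1) / 6 := by
  obtain ⟨h0, h1⟩ := hu
  rcases h1.lt_or_eq with hlt | rfl
  · unfold cubicN
    rw [if_neg (by rintro ⟨_, _⟩; linarith), if_pos ⟨by linarith, by linarith⟩]
    ring
  · norm_num [cubicN]

lemma cubicN_add_two (hu : u ∈ Set.Icc 0 1) :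
    cubicN (u + 2) = (3 * u ^ 3 - 6 * u ^ 2 + 4) / 6 := by
  obtain ⟨h0, h1⟩ := hu
  rcases h1.lt_or_eq with hlt | rfl
  · unfold cubicN
    rw [if_neg (by rintro ⟨_, _⟩; linarith), if_neg (by rintro ⟨_, _⟩; linarith),
      if_pos ⟨by linarith, by linarith⟩]
    ring
  · norm_num [cubicN]

lemma cubicN_add_three (hu : u ∈ Set.Icc 0 1) : cubicN (u + 3) = (1 - u) ^ 3 / 6 := by
  obtain ⟨h0, h1⟩ := hu
  unfold cubicN
  rw [if_neg (by rintro ⟨_, _⟩; linarith), if_neg (by rintro ⟨_, _⟩; linarith),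
    if_neg (by rintro ⟨_, _⟩; linarith), if_pos ⟨by linarith, by linarith⟩]
  ring

end CubicN

section CubicSegment

variable {c : ℕ → ℝ} {i : ℕ}

/-- The polynomial piece, on the `i`-th knot interval, of the cubic B-spline with coefficients `c`,
in the local coordinate `u ∈ [0, 1]` of that interval. It is written in terms of the increments of
`c`, so that the weights `∑_{s ≥ r} N(u + 3 - s)`, `r = 1, 2, 3`, are increasing in `u`. -/
def cubicSegment (c : ℕ → ℝ) (i : ℕ) (u : ℝ) : ℝ :=
  c i + (1 - (1 - u) ^ 3 / 6) * (c (i + 1) - c i)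
    + (1 + 3 * u + 3 * u ^ 2 - 2 * u ^ 3) / 6 * (c (i + 2) - c (i + 1))
    + u ^ 3 / 6 * (c (i + 3) - c (i + 2))

lemma cubicSegment_eq_sum_cubicN {u : ℝ} (hu : u ∈ Set.Icc 0 1) :
    cubicSegment c i u = cubicN (u + 3) * c i + cubicN (u + 2) * c (i + 1)
      + cubicN (u + 1) * c (i + 2) + cubicN u * c (i + 3) := by
  rw [cubicN_add_three hu, cubicN_add_two hu, cubicN_add_one hu, cubicN_of_mem_Icc hu]
  unfold cubicSegment
  ring

lemma cubicSegment_of_increments_eq {h : ℝ} (h₁ : c (i + 1) = c i + h)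
    (h₂ : c (i + 2) = c (i + 1) + h) (h₃ : c (i + 3) = c (i + 2) + h) (u : ℝ) :
    cubicSegment c i u = c i + (1 + u) * h := by
  rw [cubicSegment, h₃, h₂, h₁]
  ring

lemma strictMonoOn_cubicSegment (h₁ : c i < c (i + 1)) (h₂ : c (i + 1) ≤ c (i + 2))
    (h₃ : c (i + 2) ≤ c (i + 3)) : StrictMonoOn (cubicSegment c i) (Set.Icc 0 1) := by
  rintro u ⟨hu0, hu1⟩ v ⟨hv0, hv1⟩ huv
  have weight₁ : 1 - (1 - u) ^ 3 / 6 < 1 - (1 - v) ^ 3 / 6 := by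
    gcongr
  have weight₂ : (1 + 3 * u + 3 * u ^ 2 - 2 * u ^ 3) / 6
      ≤ (1 + 3 * v + 3 * v ^ 2 - 2 * v ^ 3) / 6 := by
    nlinarith [mul_nonneg hu0 hv0, mul_nonneg hu0 (sub_nonneg.2 hu1),
      mul_nonneg hv0 (sub_nonneg.2 hv1), sq_nonneg (u - v)]
  have weight₃ : u ^ 3 / 6 ≤ v ^ 3 / 6 := by gcongr
  have term₁ := mul_lt_mul_of_pos_right weight₁ (sub_pos.2 h₁)
  have term₂ := mul_le_mul_of_nonneg_right weight₂ (sub_nonneg.2 h₂)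
  have term₃ := mul_le_mul_of_nonneg_right weight₃ (sub_nonneg.2 h₃)
  unfold cubicSegment
  linarith

end CubicSegment

section Spline

variable {k0 k : ℝ}

lemma knot_add_one (k0 k : ℝ) (j : ℤ) : knot k0 k (j + 1) = knot k0 k j + k := by
  simp only [knot]
  push_cast
  ring

lemma monotone_knot (hk : 0 ≤ k) : Monotone (knot k0 k) := by
  intro i j hij
  unfold knot
  gcongr

lemma strictMono_localCoord (hk : 0 < k) (i : ℤ) :
    StrictMono fun x => (x - knot k0 k i) / k :=
  fun _ _ hxy => div_lt_div_of_pos_right (sub_lt_sub_right hxy _) hk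

lemma localCoord_mem_Icc (hk : 0 < k) {i : ℤ} {x : ℝ}
    (hx : x ∈ Set.Icc (knot k0 k i) (knot k0 k (i + 1))) :
    (x - knot k0 k i) / k ∈ Set.Icc 0 1 := by
  rw [knot_add_one] at hx
  exact ⟨div_nonneg (sub_nonneg.2 hx.1) hk.le, (div_le_one hk).2 (by linarith [hx.2])⟩

lemma Bspl_eq_cubicN_localCoord (hk : k ≠ 0) (i j : ℕ) (x : ℝ) :
    Bspl k0 k j x = cubicN ((x - knot k0 k i) / k + (i - j + 3)) := by
  simp only [Bspl, knot]
  congr 1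
  push_cast
  field_simp
  ring

lemma sum_Bspl_mul_eq_cubicSegment (hk : 0 < k) (c : ℕ → ℝ) {i J : ℕ} (hi : 1 ≤ i)
    (hiJ : i + 3 ≤ J) {x : ℝ} (hx : x ∈ Set.Icc (knot k0 k i) (knot k0 k (i + 1))) :
    ∑ j ∈ Icc 1 J, Bspl k0 k j x * c j = cubicSegment c i ((x - knot k0 k i) / k) := by
  have hu := localCoord_mem_Icc hk hx
  rw [cubicSegment_eq_sum_cubicN hu]
  simp only [Bspl_eq_cubicN_localCoord hk.ne' i]
  set u := (x - knot k0 k i) / k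
  have support_subset : Icc i (i + 3) ⊆ Icc 1 J := Icc_subset_Icc hi hiJ
  rw [← sum_subset support_subset]
  · simp only [sum_Icc_succ_top (show i ≤ i + 2 + 1 by omega),
      sum_Icc_succ_top (show i ≤ i + 1 + 1 by omega), sum_Icc_succ_top (show i ≤ i + 1 by omega),
      Icc_self, sum_singleton]
    push_cast
    ring_nf
  · intro j _ hj
    rw [mem_Icc, not_and_or, not_le, not_le] at hj
    rcases hj with hj | hj
    · have : (j : ℝ) + 1 ≤ i := by exact_mod_cast hj
      rw [cubicN_of_four_le (by linarith [hu.1]), zero_mul]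
    · have : (i : ℝ) + 4 ≤ j := by exact_mod_cast hj
      rw [cubicN_of_nonpos (by linarith [hu.2]), zero_mul]

end Spline

section Coefficients

variable {D : ℕ} {k0 k : ℝ} {β : Fin D → ℝ} {j : ℕ}

/-- The B-spline coefficients `γ_1 + ∑_{ℓ=2}^j exp γ_ℓ` of `H`, indexed from `1` as in `Hfun`. -/
def splineCoeff (D : ℕ) (k0 k : ℝ) (β : Fin D → ℝ) (j : ℕ) : ℝ :=
  gam D k0 k β 1 + ∑ l ∈ Icc 2 j, Real.exp (gam D k0 k β l)

lemma splineCoeff_succ (hj : 1 ≤ j) :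
    splineCoeff D k0 k β (j + 1) = splineCoeff D k0 k β j + Real.exp (gam D k0 k β (j + 1)) := by
  rw [splineCoeff, splineCoeff, sum_Icc_succ_top (by omega), add_assoc]

lemma splineCoeff_lt_succ (hj : 1 ≤ j) :
    splineCoeff D k0 k β j < splineCoeff D k0 k β (j + 1) := by
  rw [splineCoeff_succ hj]
  exact lt_add_of_pos_right _ (Real.exp_pos _)

lemma exp_gam_of_boundary (hk : 0 < k) (hj : j ∈ Set.Icc 2 4 ∪ Set.Icc (D + 5) (D + 7)) :
    Real.exp (gam D k0 k β j) = k := by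
  simp only [Set.mem_union, Set.mem_Icc] at hj
  rw [gam, if_neg (by omega), if_pos (by omega), Real.exp_log hk]

lemma exp_gam_interior (hk : 0 < k) (d : Fin D) :
    Real.exp (gam D k0 k β (d + 5)) = Real.exp (β d) / (∑ e, Real.exp (β e)) * (D * k) := by
  have hd := d.isLt
  have hD : (0 : ℝ) < D := by exact_mod_cast d.pos
  have hsum : 0 < ∑ e, Real.exp (β e) := sum_pos (fun _ _ => Real.exp_pos _) ⟨d, mem_univ d⟩
  rw [gam, if_neg (by omega), if_neg (by omega), dif_pos (by omega), Real.exp_sub,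
    Real.exp_log (by positivity)]
  simp only [Nat.add_sub_cancel, Fin.eta]
  field_simp

lemma sum_exp_gam_interior (hk : 0 < k) :
    ∑ d : Fin D, Real.exp (gam D k0 k β (d + 5)) = D * k := by
  simp only [exp_gam_interior hk, ← sum_mul, ← sum_div]
  rcases D.eq_zero_or_pos with rfl | hD
  · simp
  · have hsum : 0 < ∑ e, Real.exp (β e) :=
      sum_pos (fun _ _ => Real.exp_pos _) ⟨⟨0, hD⟩, mem_univ _⟩
    rw [div_self hsum.ne', one_mul]

lemma splineCoeff_succ_of_boundary (hk : 0 < k)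
    (hj : j ∈ Set.Icc 1 3 ∪ Set.Icc (D + 4) (D + 6)) :
    splineCoeff D k0 k β (j + 1) = splineCoeff D k0 k β j + k := by
  simp only [Set.mem_union, Set.mem_Icc] at hj
  rw [splineCoeff_succ (by omega), exp_gam_of_boundary hk]
  simp only [Set.mem_union, Set.mem_Icc]
  omega

lemma splineCoeff_one : splineCoeff D k0 k β 1 = knot k0 k 0 := by
  simp [splineCoeff, gam, knot]

lemma splineCoeff_four (hk : 0 < k) : splineCoeff D k0 k β 4 = knot k0 k 3 := by
  rw [splineCoeff_succ_of_boundary hk (by simp), splineCoeff_succ_of_boundary hk (by simp),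
    splineCoeff_succ_of_boundary hk (by simp), splineCoeff_one]
  simp only [knot]
  push_cast
  ring

lemma splineCoeff_D_add_four (hk : 0 < k) :
    splineCoeff D k0 k β (D + 4) = knot k0 k (D + 3) := by
  calc splineCoeff D k0 k β (D + 4)
      = splineCoeff D k0 k β 4 + ∑ l ∈ range D, Real.exp (gam D k0 k β (l + 5)) := by
        rw [eq_sum_range_sub (fun n => splineCoeff D k0 k β (n + 4)) D, zero_add]
        congr 1
        refine sum_congr rfl fun l _ => ?_
        rw [show l + 1 + 4 = (l + 4) + 1 by ring, splineCoeff_succ (by omega), add_sub_cancel_left]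
    _ = knot k0 k 3 + D * k := by
        rw [splineCoeff_four hk, sum_range, sum_exp_gam_interior hk]
    _ = knot k0 k (D + 3) := by
        simp only [knot]
        push_cast
        ring

end Coefficients

section Transformation

variable {D : ℕ} {k0 k : ℝ} {β : Fin D → ℝ} {i : ℕ} {x : ℝ}

lemma Hfun_eq_cubicSegment (hk : 0 < k) (hi : 1 ≤ i) (hiD : i ≤ D + 4)
    (hx : x ∈ Set.Icc (knot k0 k i) (knot k0 k (i + 1))) :
    Hfun D k0 k β x = cubicSegment (splineCoeff D k0 k β) i ((x - knot k0 k i) / k) := by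
  have hlo : knot k0 k 1 ≤ knot k0 k i := monotone_knot hk.le (by omega)
  have hhi : knot k0 k (i + 1) ≤ knot k0 k (D + 5) := monotone_knot hk.le (by omega)
  rw [Hfun, if_pos ⟨hlo.trans hx.1, hx.2.trans hhi⟩]
  exact sum_Bspl_mul_eq_cubicSegment hk (splineCoeff D k0 k β) hi (by omega) hx

lemma Hfun_eq_self_of_mem_boundary_Icc (hk : 0 < k) (hi : i = 1 ∨ i = D + 4)
    (hx : x ∈ Set.Icc (knot k0 k i) (knot k0 k (i + 1))) : Hfun D k0 k β x = x := by
  have coeff_first : splineCoeff D k0 k β i = knot k0 k i - k := by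
    rcases hi with rfl | rfl
    · rw [splineCoeff_one, Nat.cast_one, ← zero_add 1, knot_add_one, add_sub_cancel_right]
    · rw [splineCoeff_D_add_four hk, eq_sub_iff_add_eq, ← knot_add_one]
      push_cast
      ring_nf
  have increment (r : ℕ) (hr : r ≤ 2) : splineCoeff D k0 k β (i + r + 1)
      = splineCoeff D k0 k β (i + r) + k :=
    splineCoeff_succ_of_boundary hk (by simp only [Set.mem_union, Set.mem_Icc]; omega)
  rw [Hfun_eq_cubicSegment hk (by omega) (by omega) hx,
    cubicSegment_of_increments_eq (i := i) (increment 0 zero_le_two) (increment 1 one_le_two)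
      (increment 2 le_rfl), coeff_first]
  field_simp
  ring

lemma Hfun_eq_self_of_le (hk : 0 < k) (hx : x ≤ knot k0 k 2) : Hfun D k0 k β x = x := by
  rcases lt_or_ge x (knot k0 k 1) with hlt | hge
  · exact if_neg fun h => hlt.not_ge h.1
  · exact Hfun_eq_self_of_mem_boundary_Icc (i := 1) hk (.inl rfl)
      ⟨by simpa using hge, by simpa using hx⟩

lemma Hfun_eq_self_of_ge (hk : 0 < k) (hx : knot k0 k (D + 4) ≤ x) : Hfun D k0 k β x = x := by
  rcases lt_or_ge (knot k0 k (D + 5)) x with hlt | hge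
  · exact if_neg fun h => hlt.not_ge h.2
  · exact Hfun_eq_self_of_mem_boundary_Icc (i := D + 4) hk (.inr rfl)
      ⟨by exact_mod_cast hx, by exact_mod_cast hge⟩

lemma strictMonoOn_Hfun_Icc (hk : 0 < k) (hi : 1 ≤ i) (hiD : i ≤ D + 4) :
    StrictMonoOn (Hfun D k0 k β) (Set.Icc (knot k0 k i) (knot k0 k (i + 1))) := by
  have segment : StrictMonoOn (cubicSegment (splineCoeff D k0 k β) i) (Set.Icc 0 1) :=
    strictMonoOn_cubicSegment (splineCoeff_lt_succ hi) (splineCoeff_lt_succ (by omega)).le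
      (splineCoeff_lt_succ (by omega)).le
  exact (segment.comp (strictMono_localCoord hk i |>.strictMonoOn _)
    fun _ hx => localCoord_mem_Icc hk hx).congr
      fun _ hx => (Hfun_eq_cubicSegment hk hi hiD hx).symm

lemma strictMonoOn_Hfun_Iic (hk : 0 < k) (hi : 2 ≤ i) (hiD : i ≤ D + 5) :
    StrictMonoOn (Hfun D k0 k β) (Set.Iic (knot k0 k i)) := by
  induction i, hi using Nat.le_induction with
  | base => exact strictMonoOn_id.congr fun x hx => (Hfun_eq_self_of_le hk hx).symm
  | succ i hi ih =>
    have hknot : knot k0 k i ≤ knot k0 k (i + 1) := monotone_knot hk.le (by omega)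
    push_cast
    rw [← Set.Iic_union_Icc_eq_Iic hknot]
    exact (ih (by omega)).union (strictMonoOn_Hfun_Icc hk (by omega) (by omega)) isGreatest_Iic
      (isLeast_Icc hknot)

lemma strictMono_Hfun (hk : 0 < k) : StrictMono (Hfun D k0 k β) := by
  have left : StrictMonoOn (Hfun D k0 k β) (Set.Iic (knot k0 k (D + 4))) := by
    exact_mod_cast strictMonoOn_Hfun_Iic (i := D + 4) hk (by omega) (by omega)
  have right : StrictMonoOn (Hfun D k0 k β) (Set.Ici (knot k0 k (D + 4))) :=
    strictMonoOn_id.congr fun x hx => (Hfun_eq_self_of_ge hk hx).symm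
  exact left.Iic_union_Ici right

end Transformation

/-- Tail probabilities: Let `β ∈ ℝ^D` be arbitrary. Let `F : ℝ → ℝ` be a
continuous, strictly increasing function with range `(0,1)`, and let `G : ℝ → ℝ` satisfy
`Φ(G(t)) = F(t)` for all `t`. Let `q_a` and `q_b` be the unique reals with
`F(q_a) = Φ(a)` and `F(q_b) = Φ(b)` (where `a = k_2`, `b = k_{m−1}`). If `y` is a
real-valued random variable such that the distribution of `(H ∘ G)(y)` is `N(0,1)`,
then `ℙ(y ≤ t) = F(t)` for every `t ∈ (−∞, q_a] ∪ [q_b, ∞)`. -/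
theorem tail_probabilities (D : ℕ) (hD : 1 ≤ D) (k0 k : ℝ) (hk : 0 < k)
    (β : Fin D → ℝ)
    (F G : ℝ → ℝ) (hFcont : Continuous F) (hFmono : StrictMono F)
    (hFrange : Set.range F = Set.Ioo 0 1)
    (hG : ∀ t, stdNormalCDF (G t) = F t)
    (qa qb : ℝ) (hqa : F qa = stdNormalCDF (knot k0 k 2))
    (hqb : F qb = stdNormalCDF (knot k0 k ((D : ℤ) + 4)))
    {Ω : Type*} [MeasurableSpace Ω] (P : MeasureTheory.Measure Ω)
    [MeasureTheory.IsProbabilityMeasure P]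
    (y : Ω → ℝ) (hy : Measurable y)
    (hdist : MeasureTheory.Measure.map (fun ω => Hfun D k0 k β (G (y ω))) P
      = ProbabilityTheory.gaussianReal 0 1) :
    ∀ t : ℝ, (t ≤ qa ∨ qb ≤ t) → (P {ω | y ω ≤ t}).toReal = F t := by
  intro t ht
  have G_strictMono : StrictMono G := fun r s hrs => by
    rw [← strictMono_stdNormalCDF.lt_iff_lt, hG, hG]
    exact hFmono hrs
  have H_fixes_G_t : Hfun D k0 k β (G t) = G t := by
    rcases ht with ht | ht
    · apply Hfun_eq_self_of_le hk
      rw [← strictMono_stdNormalCDF.le_iff_le, hG, ← hqa]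
      exact hFmono.monotone ht
    · apply Hfun_eq_self_of_ge hk
      rw [← strictMono_stdNormalCDF.le_iff_le, hG, ← hqb]
      exact hFmono.monotone ht
  have aemeasurable_HGy : AEMeasurable (fun ω => Hfun D k0 k β (G (y ω))) P :=
    aemeasurable_of_map_neZero (hdist ▸ inferInstance)
  rw [measure_setOf_le_eq_map_Iic (T := Hfun D k0 k β ∘ G)
    ((strictMono_Hfun hk).comp G_strictMono) aemeasurable_HGy t]
  simp only [Function.comp_apply, hdist, H_fixes_G_t]
  exact hG t

end
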